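/- Let n, p be positive integers with 1 ≤ p ≤ n. The standard bijection φ, restricted to the set S_n(132, 1̂2⋯(p+1)) of permutations of length n that avoid 132 and avoid the hatted pattern obtained from the increasing pattern 12⋯(p+1) by marking its first entry, is a bijection onto the set of Dyck n-paths having no peak at height p. -/

import Mathlib

/-- `π` avoids the pattern 132: no subsequence `π_a π_b π_c` (`a < b < c`) satisfies
`π_a < π_c < π_b`. -/
def Avoids132 {n : ℕ} (π : Equiv.Perm (Fin n)) : Prop :=
  ¬ ∃ a b c : Fin n, a < b ∧ b < c ∧ π a < π c ∧ π c < π b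

/-- `h_i`: the number of entries of `π` occurring after `π_i` and greater than `π_i`. -/
def hstat {n : ℕ} (π : Equiv.Perm (Fin n)) (i : Fin n) : ℕ :=
  (Finset.univ.filter fun j => i < j ∧ π i < π j).card

/-- The height of the path `φ(π)` just before the `i`-th entry is read
(`h_{i-1}`, and `0` for `i = 0`). -/
def prevH {n : ℕ} (π : Equiv.Perm (Fin n)) (i : Fin n) : ℕ :=
  if _h : (i : ℕ) = 0 then 0
  else hstat π ⟨(i : ℕ) - 1, lt_of_le_of_lt (Nat.sub_le _ _) i.isLt⟩

/-- The standard bijection `φ` from `S_n(132)` to Dyck `n`-paths, as a word over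
`{u, d}` (`true` = up-step, `false` = down-step): reading `π` from left to right, when `π_i` is
read, append up-steps until the path reaches height `h_i + 1`, then append one down-step. -/
def phi {n : ℕ} (π : Equiv.Perm (Fin n)) : List Bool :=
  (List.ofFn fun i : Fin n =>
    List.replicate (hstat π i + 1 - prevH π i) true ++ [false]).flatten

/-- `π_i` is a left-to-right minimum of `π`. -/
def IsLTRMin {n : ℕ} (π : Equiv.Perm (Fin n)) (i : Fin n) : Prop :=
  ∀ j : Fin n, j < i → π i < π j

/-- The position (0-indexed) in the word `w` of its `i`-th down-step (`i` counted from `0`). -/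
def nthDown (w : List Bool) (i : ℕ) : ℕ := (w.findIdxs fun b => !b).getD i 0

/-- `g` is an occurrence of the pattern `τ` in `π`: the indices `g a` are increasing and the
subsequence `π (g 0), …, π (g k)` is order-isomorphic to (i.e. has reduction) `τ`. -/
def IsOcc {k n : ℕ} (τ : Equiv.Perm (Fin k)) (π : Equiv.Perm (Fin n)) (g : Fin k → Fin n) : Prop :=
  StrictMono g ∧ ∀ a b : Fin k, τ a < τ b ↔ π (g a) < π (g b)

/-- `π` avoids the hatted pattern `τ̂_(i)` (the pattern `τ ∈ S_{k+1}` with its `i`-th entry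
marked): every `k`-element subsequence of `π` whose reduction is `red(τ∖τ_i)` (which is encoded
by the order-isomorphism condition with `τ ∘ i.succAbove`) can be extended, by adjoining one
further entry of `π` at some position, to a `(k+1)`-element subsequence with reduction `τ`. -/
def AvoidsHat {k n : ℕ} (τ : Equiv.Perm (Fin (k + 1))) (i : Fin (k + 1))
    (π : Equiv.Perm (Fin n)) : Prop :=
  ∀ g : Fin k → Fin n, StrictMono g →
    (∀ a b : Fin k, τ (i.succAbove a) < τ (i.succAbove b) ↔ π (g a) < π (g b)) →
    ∃ h : Fin (k + 1) → Fin n, IsOcc τ π h ∧ Set.range g ⊆ Set.range h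

/-- `w` is a Dyck `n`-path: a word of length `2n` over `{u, d}` (`true` = up, `false` = down)
with `n` up-steps, in which every prefix contains at least as many `u`'s as `d`'s. -/
def IsDyckPath (n : ℕ) (w : List Bool) : Prop :=
  w.length = 2 * n ∧ w.count true = n ∧
    ∀ p : ℕ, (w.take p).count false ≤ (w.take p).count true

/-- `w` has a peak (an occurrence of the factor `ud`) at height `p`: the height is the number of
`u`'s minus the number of `d`'s in the prefix ending with the `u` of that occurrence. -/
def HasPeakAtHeight (w : List Bool) (p : ℕ) : Prop :=
  ∃ q : ℕ, q + 1 < w.length ∧ w.getD q false = true ∧ w.getD (q + 1) true = false ∧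
    (w.take (q + 1)).count true = (w.take (q + 1)).count false + p

/-!
The path `φ(π)` is the one whose heights after the down-steps are `h_1, …, h_n`. A permutation is
determined by these numbers, and every sequence with `h_i ≤ n - i` occurs, since there are `n!` of
them. The heights after the down-steps of a Dyck path are characterised by `h_{i-1} ≤ h_i + 1` and
`h_n = 0`, and the first condition says exactly that `π` avoids 132: this makes `φ` a bijection.

An entry contributes a peak exactly when `h_{i-1} ≤ h_i`, that is, when it is a left-to-right
minimum, and then at height `h_i + 1`. In a 132-avoider the entries weakly northeast of `π_i` form
an increasing subsequence of length `h_i + 1`. If `π_i` is a left-to-right minimum, no longer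
increasing subsequence contains it, so a peak at height `p` produces an inextensible increasing
subsequence of length `p`. Conversely, an increasing subsequence whose first entry is `π_i` lies in
the northeast set of `π_i`: it is extended inside this set if it is not the whole of it, and by an
earlier smaller entry if `π_i` is not a left-to-right minimum.
-/

/-! ### Lattice words from an arbitrary height -/

/-- `w` is the remainder of a Dyck path that has already reached height `c`. -/
def IsDyckFrom (c : ℕ) (w : List Bool) : Prop :=
  c + w.count true = w.count false ∧ ∀ p, (w.take p).count false ≤ c + (w.take p).count true

/-- `HasPeakAtHeight` for a path starting at height `c` instead of `0`. -/
def HasPeakFrom (c : ℕ) (w : List Bool) (p : ℕ) : Prop :=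
  ∃ q, q + 1 < w.length ∧ w.getD q false = true ∧ w.getD (q + 1) true = false ∧
    c + (w.take (q + 1)).count true = (w.take (q + 1)).count false + p

/-- The factor of `φ(π)` contributed by one entry: from height `c`, climb to height `h + 1`, then
take one down-step to height `h`. It is only meaningful for `c ≤ h + 1`, the subtraction being
truncated. -/
def block (c h : ℕ) : List Bool :=
  List.replicate (h + 1 - c) true ++ [false]

lemma isDyckPath_iff {n : ℕ} {w : List Bool} :
    IsDyckPath n w ↔ IsDyckFrom 0 w ∧ w.count false = n := by
  have hlen := List.count_true_add_count_false w
  simp only [IsDyckPath, IsDyckFrom, zero_add]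
  constructor
  · rintro ⟨hl, ht, hpre⟩
    exact ⟨⟨by omega, hpre⟩, by omega⟩
  · rintro ⟨⟨ht, hpre⟩, hf⟩
    exact ⟨by omega, by omega, hpre⟩

lemma hasPeakAtHeight_iff {w : List Bool} {p : ℕ} : HasPeakAtHeight w p ↔ HasPeakFrom 0 w p := by
  simp only [HasPeakAtHeight, HasPeakFrom, zero_add]

lemma isDyckFrom_true_cons {c : ℕ} {w : List Bool} :
    IsDyckFrom c (true :: w) ↔ IsDyckFrom (c + 1) w := by
  unfold IsDyckFrom
  rw [← Nat.and_forall_add_one]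
  simp [add_assoc, add_comm 1]

lemma isDyckFrom_succ_false_cons {c : ℕ} {w : List Bool} :
    IsDyckFrom (c + 1) (false :: w) ↔ IsDyckFrom c w := by
  unfold IsDyckFrom
  rw [← Nat.and_forall_add_one]
  simp [add_right_comm]

lemma not_isDyckFrom_zero_false_cons {w : List Bool} : ¬ IsDyckFrom 0 (false :: w) := by
  intro h
  simpa using h.2 1

lemma isDyckFrom_replicate_append {c k : ℕ} {w : List Bool} :
    IsDyckFrom c (List.replicate k true ++ w) ↔ IsDyckFrom (c + k) w := by
  induction k generalizing c with
  | zero => simp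
  | succ k ih =>
    rw [List.replicate_succ, List.cons_append, isDyckFrom_true_cons, ih, add_right_comm, add_assoc]

lemma isDyckFrom_block_append {c h : ℕ} (hc : c ≤ h + 1) {w : List Bool} :
    IsDyckFrom c (block c h ++ w) ↔ IsDyckFrom h w := by
  simp [block, isDyckFrom_replicate_append, isDyckFrom_succ_false_cons, Nat.add_sub_cancel' hc]

lemma hasPeakFrom_true_cons {c p : ℕ} {w : List Bool} :
    HasPeakFrom c (true :: w) p ↔ (w.head? = some false ∧ c + 1 = p) ∨ HasPeakFrom (c + 1) w p := by
  unfold HasPeakFrom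
  rw [← Nat.or_exists_add_one]
  refine or_congr ?_ (exists_congr fun q => ?_)
  · cases w <;> simp
  · simp [← add_assoc, add_right_comm c 1]

lemma hasPeakFrom_succ_false_cons {c p : ℕ} {w : List Bool} :
    HasPeakFrom (c + 1) (false :: w) p ↔ HasPeakFrom c w p := by
  unfold HasPeakFrom
  rw [← Nat.or_exists_add_one]
  simp [add_right_comm _ 1]

lemma hasPeakFrom_replicate_append {c p k : ℕ} {w : List Bool} :
    HasPeakFrom c (List.replicate k true ++ false :: w) p ↔
      (0 < k ∧ c + k = p) ∨ HasPeakFrom (c + k) (false :: w) p := by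
  induction k generalizing c with
  | zero => simp
  | succ k ih =>
    rw [List.replicate_succ, List.cons_append, hasPeakFrom_true_cons, ih]
    rcases k with _ | k <;> simp [List.replicate_succ, add_assoc, add_comm 1]

lemma hasPeakFrom_block_append {c h p : ℕ} (hc : c ≤ h + 1) {w : List Bool} :
    HasPeakFrom c (block c h ++ w) p ↔ (c ≤ h ∧ h + 1 = p) ∨ HasPeakFrom h w p := by
  simp [block, hasPeakFrom_replicate_append, hasPeakFrom_succ_false_cons,
    Nat.add_sub_cancel' hc]

lemma count_false_block (c h : ℕ) : (block c h).count false = 1 := by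
  simp [block, List.count_replicate]

lemma block_append_inj {c h h' : ℕ} (hc : c ≤ h + 1) (hc' : c ≤ h' + 1) {w w' : List Bool}
    (heq : block c h ++ w = block c h' ++ w') : h = h' ∧ w = w' := by
  have hidx : h + 1 - c = h' + 1 - c := by
    simpa [block, List.idxOf_append] using congrArg (List.idxOf false) heq
  obtain rfl : h = h' := by omega
  exact ⟨rfl, List.append_cancel_left heq⟩

lemma exists_eq_block_append {c : ℕ} {w : List Bool} (hw : IsDyckFrom c w) (hmem : false ∈ w) :
    ∃ h w', c ≤ h + 1 ∧ w = block c h ++ w' := by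
  obtain ⟨u, w', rfl, hu⟩ := List.eq_append_cons_of_mem hmem
  obtain ⟨k, rfl⟩ : ∃ k, u = List.replicate k true :=
    ⟨_, List.eq_replicate_of_mem fun b hb => by cases b <;> simp_all⟩
  have hpos : c + k ≠ 0 := fun h =>
    not_isDyckFrom_zero_false_cons (h ▸ isDyckFrom_replicate_append.1 hw)
  refine ⟨c + k - 1, w', by omega, ?_⟩
  simp [block, show c + k - 1 + 1 - c = k by omega]

/-! ### Height profiles -/

/-- The word over `{u, d}` that starts at height `g 0` and, provided that no entry of `g` exceeds
the next one by more than `1`, is at height `g i` just after its `i`-th down-step. -/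
def pathOfHeights {n : ℕ} (g : Fin (n + 1) → ℕ) : List Bool :=
  (List.ofFn fun i : Fin n => block (g i.castSucc) (g i.succ)).flatten

/-- `g` is the sequence of heights after the down-steps (preceded by the initial height) of a path
that ends on the axis. -/
def IsHeightProfile {n : ℕ} (g : Fin (n + 1) → ℕ) : Prop :=
  (∀ i : Fin n, g i.castSucc ≤ g i.succ + 1) ∧ g (Fin.last n) = 0

lemma pathOfHeights_succ {n : ℕ} (g : Fin (n + 2) → ℕ) :
    pathOfHeights g = block (g 0) (g 1) ++ pathOfHeights (Fin.tail g) := by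
  simp [pathOfHeights, List.ofFn_succ, Fin.tail]

lemma isHeightProfile_succ {n : ℕ} {g : Fin (n + 2) → ℕ} :
    IsHeightProfile g ↔ g 0 ≤ g 1 + 1 ∧ IsHeightProfile (Fin.tail g) := by
  simp [IsHeightProfile, Fin.forall_fin_succ (n := n), Fin.tail, and_assoc]

lemma IsHeightProfile.apply_add_le {n : ℕ} {g : Fin (n + 1) → ℕ} (hg : IsHeightProfile g)
    (i : Fin (n + 1)) : g i + i ≤ n := by
  induction i using Fin.reverseInduction with
  | last => simp [hg.2]
  | cast i ih =>
    have := hg.1 i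
    simp only [Fin.val_succ, Fin.val_castSucc] at ih ⊢
    omega

lemma count_false_pathOfHeights {n : ℕ} (g : Fin (n + 1) → ℕ) :
    (pathOfHeights g).count false = n := by
  induction n with
  | zero => simp [pathOfHeights]
  | succ n ih =>
    rw [pathOfHeights_succ, List.count_append, count_false_block, ih, add_comm]

lemma IsHeightProfile.isDyckFrom {n : ℕ} {g : Fin (n + 1) → ℕ} (hg : IsHeightProfile g) :
    IsDyckFrom (g 0) (pathOfHeights g) := by
  induction n with
  | zero => exact ⟨by simpa [pathOfHeights] using hg.2, by simp [pathOfHeights]⟩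
  | succ n ih =>
    obtain ⟨hstep, htail⟩ := isHeightProfile_succ.1 hg
    rw [pathOfHeights_succ, isDyckFrom_block_append hstep]
    exact ih htail

lemma IsHeightProfile.hasPeakFrom_iff {n p : ℕ} {g : Fin (n + 1) → ℕ} (hg : IsHeightProfile g) :
    HasPeakFrom (g 0) (pathOfHeights g) p ↔
      ∃ i : Fin n, g i.castSucc ≤ g i.succ ∧ g i.succ + 1 = p := by
  induction n with
  | zero => simp [pathOfHeights, HasPeakFrom]
  | succ n ih =>
    obtain ⟨hstep, htail⟩ := isHeightProfile_succ.1 hg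
    rw [pathOfHeights_succ, hasPeakFrom_block_append hstep, Fin.exists_fin_succ]
    exact or_congr Iff.rfl (ih htail)

lemma IsHeightProfile.eq_of_pathOfHeights_eq {n : ℕ} {g g' : Fin (n + 1) → ℕ}
    (hg : IsHeightProfile g) (hg' : IsHeightProfile g') (h0 : g 0 = g' 0)
    (hpath : pathOfHeights g = pathOfHeights g') : g = g' := by
  induction n with
  | zero => exact funext fun i => by rwa [Fin.fin_one_eq_zero i]
  | succ n ih =>
    obtain ⟨hstep, htail⟩ := isHeightProfile_succ.1 hg
    obtain ⟨hstep', htail'⟩ := isHeightProfile_succ.1 hg'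
    rw [pathOfHeights_succ, pathOfHeights_succ, ← h0] at hpath
    obtain ⟨h1, hrest⟩ := block_append_inj hstep (h0 ▸ hstep') hpath
    rw [← Fin.cons_self_tail g, ← Fin.cons_self_tail g', h0, ih htail htail' h1 hrest]

lemma IsDyckFrom.exists_isHeightProfile {c n : ℕ} {w : List Bool} (hw : IsDyckFrom c w)
    (hn : w.count false = n) :
    ∃ g : Fin (n + 1) → ℕ, IsHeightProfile g ∧ g 0 = c ∧ pathOfHeights g = w := by
  induction n generalizing c w with
  | zero =>
    have hcount := hw.1
    have hlen := List.count_true_add_count_false w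
    obtain rfl : w = [] := List.length_eq_zero_iff.1 (by omega)
    exact ⟨fun _ => 0, ⟨fun i => i.elim0, rfl⟩, by simpa using hcount.symm, by simp [pathOfHeights]⟩
  | succ n ih =>
    obtain ⟨h, w', hc, rfl⟩ :=
      exists_eq_block_append hw (List.count_pos_iff.1 (by omega))
    rw [List.count_append, count_false_block] at hn
    obtain ⟨g, hg, rfl, rfl⟩ := ih ((isDyckFrom_block_append hc).1 hw) (by omega)
    exact ⟨Fin.cons c g, isHeightProfile_succ.2 ⟨hc, hg⟩, rfl, pathOfHeights_succ _⟩

/-! ### The code of a permutation -/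

section

variable {n : ℕ} {π σ : Equiv.Perm (Fin n)} {i j : Fin n}

/-- The positions weakly to the right of `i` whose entries are at least `π i`, that is, `i` itself
together with the positions counted by `hstat π i`. -/
def northeast (π : Equiv.Perm (Fin n)) (i : Fin n) : Finset (Fin n) :=
  {j | i ≤ j ∧ π i ≤ π j}

lemma mem_northeast : j ∈ northeast π i ↔ i ≤ j ∧ π i ≤ π j := by
  simp [northeast]

lemma self_mem_northeast (π : Equiv.Perm (Fin n)) (i : Fin n) : i ∈ northeast π i :=
  mem_northeast.2 ⟨le_rfl, le_rfl⟩

lemma lt_and_lt_of_mem_northeast (hj : j ∈ northeast π i) (hne : j ≠ i) : i < j ∧ π i < π j :=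
  ⟨(mem_northeast.1 hj).1.lt_of_ne' hne,
    (mem_northeast.1 hj).2.lt_of_ne' (π.injective.ne hne)⟩

lemma northeast_subset (hj : j ∈ northeast π i) : northeast π j ⊆ northeast π i := by
  obtain ⟨hij, hπ⟩ := mem_northeast.1 hj
  exact fun k hk => mem_northeast.2 <| (mem_northeast.1 hk).imp hij.trans hπ.trans

lemma card_northeast (π : Equiv.Perm (Fin n)) (i : Fin n) :
    (northeast π i).card = hstat π i + 1 := by
  have hinsert : northeast π i = insert i (Finset.univ.filter fun j => i < j ∧ π i < π j) := by
    ext j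
    rcases eq_or_ne j i with rfl | hne
    · simp [self_mem_northeast]
    · simp [mem_northeast, hne, hne.symm.le_iff_lt, (π.injective.ne hne.symm).le_iff_lt]
  rw [hinsert, Finset.card_insert_of_notMem (by simp), hstat]

lemma hstat_lt_of_lt (hij : i < j) (hπ : π i < π j) : hstat π j < hstat π i := by
  have hcard := Finset.card_lt_card <| Finset.ssubset_iff_subset_ne.2
    ⟨northeast_subset (mem_northeast.2 ⟨hij.le, hπ.le⟩), fun h =>
      hij.not_ge (mem_northeast.1 (h ▸ self_mem_northeast π i)).1⟩
  rw [card_northeast, card_northeast] at hcard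
  omega

lemma hstat_le_iff_of_covBy (hij : i ⋖ j) : hstat π i ≤ hstat π j ↔ π j < π i := by
  constructor
  · intro hle
    refine (π.injective.ne hij.ne).lt_or_gt.resolve_left fun hπ => ?_
    exact (hstat_lt_of_lt hij.lt hπ).not_ge hle
  · intro hπ
    refine Finset.card_le_card fun k => ?_
    simp only [Finset.mem_filter, Finset.mem_univ, true_and]
    rintro ⟨hik, hπk⟩
    refine ⟨(hij.ge_of_gt hik).lt_of_ne ?_, hπ.trans hπk⟩
    rintro rfl
    exact hπ.not_gt hπk

lemma hstat_add_lt (π : Equiv.Perm (Fin n)) (i : Fin n) : hstat π i + i < n := by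
  have hcard := Finset.card_le_card (s := northeast π i) (t := Finset.Ici i)
    fun j hj => Finset.mem_Ici.2 (mem_northeast.1 hj).1
  rw [card_northeast, Fin.card_Ici] at hcard
  omega

lemma hstat_eq_card_sdiff (π : Equiv.Perm (Fin n)) (i : Fin n) :
    hstat π i = (Finset.Ioi (π i) \ (Finset.Iio i).image π).card := by
  rw [hstat, ← Finset.card_image_of_injective _ π.injective]
  congr 1
  ext v
  obtain ⟨j, rfl⟩ := π.surjective v
  simp only [Finset.mem_image, Finset.mem_filter, Finset.mem_univ, true_and, π.injective.eq_iff,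
    exists_eq_right, Finset.mem_sdiff, Finset.mem_Ioi, Finset.mem_Iio, not_lt]
  constructor
  · exact fun ⟨hij, hπ⟩ => ⟨hπ, hij.le⟩
  · rintro ⟨hπ, hij⟩
    exact ⟨hij.lt_of_ne (by rintro rfl; exact hπ.false), hπ⟩

lemma hstat_lt_of_eq_on_Iio (hagree : ∀ j < i, π j = σ j) (hlt : π i < σ i) :
    hstat σ i < hstat π i := by
  have himage : (Finset.Iio i).image π = (Finset.Iio i).image σ :=
    Finset.image_congr fun j hj => hagree j (by simpa using hj)
  rw [hstat_eq_card_sdiff, hstat_eq_card_sdiff, himage]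
  refine Finset.card_lt_card <| Finset.ssubset_iff_of_subset
    (Finset.sdiff_subset_sdiff (Finset.Ioi_subset_Ioi hlt.le) le_rfl) |>.2 ⟨σ i, ?_, by simp⟩
  simpa using hlt

lemma hstat_injective : Function.Injective (hstat : Equiv.Perm (Fin n) → Fin n → ℕ) := by
  intro π σ h
  ext1 i
  induction i using WellFoundedLT.induction with
  | ind i ih =>
    rcases lt_trichotomy (π i) (σ i) with hlt | heq | hgt
    · exact absurd (congrFun h i) (hstat_lt_of_eq_on_Iio ih hlt).ne'
    · exact heq
    · exact absurd (congrFun h i) (hstat_lt_of_eq_on_Iio (fun j hj => (ih j hj).symm) hgt).ne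

lemma image_hstat_univ (n : ℕ) :
    Finset.univ.image (hstat : Equiv.Perm (Fin n) → Fin n → ℕ) =
      Fintype.piFinset fun i : Fin n => Finset.range (n - (i : ℕ)) := by
  -- Both sides have `n!` elements, so the inclusion suffices.
  refine Finset.eq_of_subset_of_card_le ?_ (le_of_eq ?_)
  · intro f hf
    obtain ⟨π, -, rfl⟩ := Finset.mem_image.1 hf
    exact Fintype.mem_piFinset.2 fun i =>
      Finset.mem_range.2 (Nat.lt_sub_of_add_lt (hstat_add_lt π i))
  · rw [Finset.card_image_of_injective _ hstat_injective, Finset.card_univ, Fintype.card_perm,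
      Fintype.card_fin, Fintype.card_piFinset]
    simp only [Finset.card_range]
    rw [Fin.prod_univ_eq_prod_range (fun i => n - i) n, ← Nat.descFactorial_eq_prod_range,
      Nat.descFactorial_self]

end

/-! ### Avoiding 132 -/

section

variable {n : ℕ} {π : Equiv.Perm (Fin n)}

lemma Avoids132.lt_of_lt (h : Avoids132 π) {a b c : Fin n} (hab : a < b) (hbc : b < c)
    (hac : π a < π c) : π b < π c :=
  (π.injective.ne hbc.ne).lt_or_gt.resolve_right fun hcb => h ⟨a, b, c, hab, hbc, hac, hcb⟩

lemma Avoids132.hstat_le_of_covBy (h : Avoids132 π) {a b : Fin n} (hab : a ⋖ b) :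
    hstat π a ≤ hstat π b + 1 := by
  have hsub : northeast π a ⊆ insert a (northeast π b) := by
    intro j hj
    rcases eq_or_ne j a with rfl | hne
    · exact Finset.mem_insert_self _ _
    obtain ⟨haj, hπ⟩ := lt_and_lt_of_mem_northeast hj hne
    refine Finset.mem_insert_of_mem (mem_northeast.2 ⟨hab.ge_of_gt haj, ?_⟩)
    rcases (hab.ge_of_gt haj).eq_or_lt with rfl | hbj
    · exact le_rfl
    · exact (h.lt_of_lt hab.lt hbj hπ).le
  have hcard := (Finset.card_le_card hsub).trans (Finset.card_insert_le _ _)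
  rw [card_northeast, card_northeast] at hcard
  omega

lemma exists_covBy_and_not_of_lt {α : Type*} [PartialOrder α] [IsStronglyAtomic α]
    [WellFoundedGT α] {P : α → Prop} {a b : α} (hab : a < b) (ha : P a) (hb : ¬ P b) :
    ∃ x y, x ⋖ y ∧ y ≤ b ∧ P x ∧ ¬ P y := by
  induction a using WellFoundedGT.induction with
  | ind a ih =>
    obtain ⟨y, hay, hyb⟩ := exists_covBy_le_of_lt hab
    by_cases hy : P y
    · exact ih y hay.lt (hyb.lt_of_ne fun h => hb (h ▸ hy)) hy
    · exact ⟨a, y, hay, hyb, ha, hy⟩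

lemma exists_covBy_of_not_avoids132 (h : ¬ Avoids132 π) :
    ∃ a b c, a ⋖ b ∧ b < c ∧ π a < π c ∧ π c < π b := by
  obtain ⟨a, b, c, hab, hbc, hac, hcb⟩ := not_not.1 h
  obtain ⟨x, y, hxy, hyb, hx, hy⟩ :=
    exists_covBy_and_not_of_lt (P := fun m => π m < π c) hab hac hcb.not_gt
  have hyc := hyb.trans_lt hbc
  exact ⟨x, y, c, hxy, hyc, hx, (π.injective.ne hyc.ne).lt_or_gt.resolve_left hy⟩

lemma avoids132_iff_hstat :
    Avoids132 π ↔ ∀ a b, a ⋖ b → hstat π a ≤ hstat π b + 1 := by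
  refine ⟨fun h a b => h.hstat_le_of_covBy, fun h => by_contra fun hπ => ?_⟩
  obtain ⟨a, b, c, hab, hbc, hac, hcb⟩ := exists_covBy_of_not_avoids132 hπ
  have hsub : insert a (insert c (northeast π b)) ⊆ northeast π a := by
    refine Finset.insert_subset (self_mem_northeast π a) (Finset.insert_subset
      (mem_northeast.2 ⟨(hab.lt.trans hbc).le, hac.le⟩) (northeast_subset ?_))
    exact mem_northeast.2 ⟨hab.le, (hac.trans hcb).le⟩
  have ha : a ∉ insert c (northeast π b) := by
    simp [mem_northeast, (hab.lt.trans hbc).ne, hab.lt]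
  have hc : c ∉ northeast π b := by simp [mem_northeast, hcb]
  have hcard := Finset.card_le_card hsub
  rw [Finset.card_insert_of_notMem ha, Finset.card_insert_of_notMem hc, card_northeast,
    card_northeast] at hcard
  have := h a b hab
  omega

lemma Avoids132.isLTRMin_iff_of_covBy (h : Avoids132 π) {a b : Fin n} (hab : a ⋖ b) :
    IsLTRMin π b ↔ π b < π a := by
  refine ⟨fun hmin => hmin a hab.lt, fun hba j hj => ?_⟩
  rcases (hab.le_of_lt hj).eq_or_lt with rfl | hja
  · exact hba
  · exact (π.injective.ne hj.ne).lt_or_gt.resolve_left fun hπ => h ⟨j, a, b, hja, hab.lt, hπ, hba⟩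

lemma Avoids132.strictMonoOn_northeast (h : Avoids132 π) (i : Fin n) :
    StrictMonoOn π (northeast π i) := by
  intro a ha b hb hab
  have hπb := (lt_and_lt_of_mem_northeast hb ((mem_northeast.1 ha).1.trans_lt hab).ne').2
  rcases (mem_northeast.1 ha).1.eq_or_lt with rfl | hia
  · exact hπb
  · exact h.lt_of_lt hia hab hπb

end

/-! ### The path of a permutation -/

lemma isMin_or_exists_covBy {α : Type*} [PartialOrder α] [IsStronglyCoatomic α] (i : α) :
    IsMin i ∨ ∃ a, a ⋖ i := by
  refine or_iff_not_imp_left.2 fun hi => ?_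
  obtain ⟨j, hj⟩ := not_isMin_iff.1 hi
  obtain ⟨a, -, ha⟩ := exists_le_covBy_of_lt hj
  exact ⟨a, ha⟩

section

variable {n p : ℕ} {π : Equiv.Perm (Fin n)}

/-- The heights of `φ(π)` after its down-steps, preceded by the initial height `0`. -/
def heightProfile (π : Equiv.Perm (Fin n)) : Fin (n + 1) → ℕ :=
  Fin.cons 0 (hstat π)

lemma heightProfile_succ (π : Equiv.Perm (Fin n)) (i : Fin n) :
    heightProfile π i.succ = hstat π i :=
  rfl

lemma heightProfile_castSucc (π : Equiv.Perm (Fin n)) (i : Fin n) :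
    heightProfile π i.castSucc = prevH π i := by
  cases n with
  | zero => exact i.elim0
  | succ n => cases i using Fin.cases <;> rfl

lemma phi_eq_pathOfHeights (π : Equiv.Perm (Fin n)) :
    phi π = pathOfHeights (heightProfile π) := by
  simp only [phi, pathOfHeights, block, heightProfile_succ, heightProfile_castSucc]

lemma heightProfile_injective :
    Function.Injective (heightProfile : Equiv.Perm (Fin n) → Fin (n + 1) → ℕ) :=
  (Fin.cons_right_injective _).comp hstat_injective

lemma IsHeightProfile.exists_heightProfile_eq {g : Fin (n + 1) → ℕ} (hg : IsHeightProfile g)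
    (h0 : g 0 = 0) : ∃ π : Equiv.Perm (Fin n), heightProfile π = g := by
  have hcode : Fin.tail g ∈ Fintype.piFinset fun i : Fin n => Finset.range (n - (i : ℕ)) :=
    Fintype.mem_piFinset.2 fun i => Finset.mem_range.2 <| by
      have := hg.apply_add_le i.succ
      rw [Fin.val_succ] at this
      simp only [Fin.tail]
      omega
  rw [← image_hstat_univ] at hcode
  obtain ⟨π, -, hπ⟩ := Finset.mem_image.1 hcode
  exact ⟨π, by rw [heightProfile, hπ, ← h0, Fin.cons_self_tail]⟩

lemma prevH_of_isMin {i : Fin n} (hi : IsMin i) : prevH π i = 0 := by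
  cases n with
  | zero => exact i.elim0
  | succ n =>
    rw [isMin_iff_eq_bot.1 hi]
    rfl

lemma prevH_of_covBy {a i : Fin n} (h : a ⋖ i) : prevH π i = hstat π a := by
  have hval : (a : ℕ) + 1 = i := Order.succ_eq_iff_covBy.2 (Fin.covBy_iff.1 h)
  rw [prevH, dif_neg (by omega)]
  congr 1
  ext
  simp [← hval]

lemma heightProfile_last (π : Equiv.Perm (Fin n)) : heightProfile π (Fin.last n) = 0 := by
  cases n with
  | zero => rfl
  | succ n =>
    have := hstat_add_lt π (Fin.last n)
    rw [← Fin.succ_last, heightProfile_succ]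
    simp only [Fin.val_last] at this
    omega

lemma avoids132_iff_isHeightProfile : Avoids132 π ↔ IsHeightProfile (heightProfile π) := by
  simp only [avoids132_iff_hstat, IsHeightProfile, heightProfile_last, and_true,
    heightProfile_castSucc, heightProfile_succ]
  constructor
  · intro h i
    rcases isMin_or_exists_covBy i with hi | ⟨a, ha⟩
    · simp [prevH_of_isMin hi]
    · exact prevH_of_covBy (π := π) ha ▸ h a i ha
  · exact fun h a b hab => prevH_of_covBy (π := π) hab ▸ h b

lemma Avoids132.prevH_le_hstat_iff (h : Avoids132 π) (i : Fin n) :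
    prevH π i ≤ hstat π i ↔ IsLTRMin π i := by
  rcases isMin_or_exists_covBy i with hi | ⟨a, ha⟩
  · simp [prevH_of_isMin hi, IsLTRMin, hi.not_lt]
  · rw [prevH_of_covBy ha, hstat_le_iff_of_covBy ha, h.isLTRMin_iff_of_covBy ha]

lemma Avoids132.hasPeakAtHeight_phi_iff (h : Avoids132 π) :
    HasPeakAtHeight (phi π) p ↔ ∃ i, IsLTRMin π i ∧ hstat π i + 1 = p := by
  rw [hasPeakAtHeight_iff, phi_eq_pathOfHeights]
  refine (avoids132_iff_isHeightProfile.1 h).hasPeakFrom_iff.trans (exists_congr fun i => ?_)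
  rw [heightProfile_castSucc, heightProfile_succ, h.prevH_le_hstat_iff]

lemma bijOn_phi (n : ℕ) :
    Set.BijOn phi {π : Equiv.Perm (Fin n) | Avoids132 π} {w | IsDyckPath n w} := by
  refine ⟨fun π h => ?_, fun π h σ h' heq => ?_, fun w hw => ?_⟩
  · rw [Set.mem_ofPred_eq, isDyckPath_iff, phi_eq_pathOfHeights]
    exact ⟨(avoids132_iff_isHeightProfile.1 h).isDyckFrom, count_false_pathOfHeights _⟩
  · rw [phi_eq_pathOfHeights, phi_eq_pathOfHeights] at heq
    exact heightProfile_injective <| (avoids132_iff_isHeightProfile.1 h).eq_of_pathOfHeights_eq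
      (avoids132_iff_isHeightProfile.1 h') rfl heq
  · obtain ⟨hdyck, hcount⟩ := isDyckPath_iff.1 hw
    obtain ⟨g, hg, h0, rfl⟩ := hdyck.exists_isHeightProfile hcount
    obtain ⟨π, rfl⟩ := hg.exists_heightProfile_eq h0
    exact ⟨π, avoids132_iff_isHeightProfile.2 hg, phi_eq_pathOfHeights π⟩

end

/-! ### Hatted increasing patterns -/

lemma strictMonoOn_range_iff {α β γ : Type*} [LinearOrder α] [Preorder β] [Preorder γ]
    {f : β → γ} {g : α → β} (hg : StrictMono g) :
    StrictMonoOn f (Set.range g) ↔ StrictMono (f ∘ g) := by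
  simp [StrictMonoOn, StrictMono, hg.lt_iff_lt]

lemma strictMonoOn_insert_of_forall_lt {α β : Type*} [Preorder α] [Preorder β] {f : α → β}
    {s : Set α} {x : α} (hs : StrictMonoOn f s) (hx : ∀ y ∈ s, x < y ∧ f x < f y) :
    StrictMonoOn f (insert x s) := by
  rintro a (rfl | ha) b (rfl | hb) hab
  · exact absurd hab (lt_irrefl _)
  · exact (hx b hb).2
  · exact absurd hab (hx a ha).1.not_gt
  · exact hs ha hb hab

section

variable {n p : ℕ} {π : Equiv.Perm (Fin n)}

lemma isOcc_one_iff {k : ℕ} {g : Fin k → Fin n} :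
    IsOcc 1 π g ↔ StrictMono g ∧ StrictMonoOn π (Set.range g) := by
  refine and_congr_right fun hg => ?_
  rw [strictMonoOn_range_iff hg]
  exact ⟨fun h a b hab => (h a b).1 hab, fun h a b => h.lt_iff_lt.symm⟩

lemma avoidsHat_one_iff_forall_isOcc {k : ℕ} {i : Fin (k + 1)} :
    AvoidsHat 1 i π ↔ ∀ g : Fin k → Fin n, IsOcc 1 π g →
      ∃ h : Fin (k + 1) → Fin n, IsOcc 1 π h ∧ Set.range g ⊆ Set.range h := by
  simp only [AvoidsHat, IsOcc, Equiv.Perm.one_apply, Fin.succAbove_lt_succAbove_iff, and_imp]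

lemma exists_isOcc_one_range_eq_iff {k : ℕ} {s : Finset (Fin n)} :
    (∃ g : Fin k → Fin n, IsOcc 1 π g ∧ Set.range g = s) ↔ s.card = k ∧ StrictMonoOn π s := by
  simp only [isOcc_one_iff]
  constructor
  · rintro ⟨g, ⟨hg, hπ⟩, hs⟩
    obtain rfl : Finset.univ.image g = s := Finset.coe_injective (by simpa using hs)
    exact ⟨by simp [Finset.card_image_of_injective _ hg.injective], hs ▸ hπ⟩
  · rintro ⟨hcard, hπ⟩
    have hrange := s.range_orderEmbOfFin hcard
    exact ⟨s.orderEmbOfFin hcard, ⟨OrderEmbedding.strictMono _, hrange ▸ hπ⟩, hrange⟩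

lemma avoidsHat_one_iff_exists_superset {k : ℕ} {i : Fin (k + 1)} :
    AvoidsHat 1 i π ↔ ∀ s : Finset (Fin n), s.card = k → StrictMonoOn π s →
      ∃ t : Finset (Fin n), s ⊆ t ∧ t.card = k + 1 ∧ StrictMonoOn π t := by
  rw [avoidsHat_one_iff_forall_isOcc]
  constructor
  · intro hext s hcard hs
    obtain ⟨g, hg, hgs⟩ := exists_isOcc_one_range_eq_iff.2 ⟨hcard, hs⟩
    obtain ⟨h, hh, hsub⟩ := hext g hg
    refine ⟨Finset.univ.image h, ?_, exists_isOcc_one_range_eq_iff.1 ⟨h, hh, by simp⟩⟩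
    simpa [← Finset.coe_subset, ← hgs] using hsub
  · intro hext g hg
    obtain ⟨hcard, hs⟩ :=
      exists_isOcc_one_range_eq_iff (s := Finset.univ.image g).1 ⟨g, hg, by simp⟩
    obtain ⟨t, hst, ht⟩ := hext _ hcard hs
    obtain ⟨h, hh, hrange⟩ := exists_isOcc_one_range_eq_iff.2 ht
    refine ⟨h, hh, ?_⟩
    simpa [← Finset.coe_subset, ← hrange] using hst

lemma subset_northeast_of_strictMonoOn {s : Finset (Fin n)} {i : Fin n} (hs : StrictMonoOn π s)
    (hi : i ∈ s) (hle : ∀ j ∈ s, i ≤ j) : s ⊆ northeast π i :=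
  fun j hj => mem_northeast.2 ⟨hle j hj, hs.monotoneOn hi hj (hle j hj)⟩

lemma IsLTRMin.le_of_strictMonoOn {s : Finset (Fin n)} {i : Fin n} (hmin : IsLTRMin π i)
    (hs : StrictMonoOn π s) (hi : i ∈ s) : ∀ j ∈ s, i ≤ j :=
  fun j hj => le_of_not_gt fun hji => (hs hj hi hji).not_gt (hmin j hji)

lemma Avoids132.exists_strictMonoOn_superset (h : Avoids132 π)
    (hpeak : ∀ i, IsLTRMin π i → hstat π i + 1 ≠ p) {s : Finset (Fin n)} (hne : s.Nonempty)
    (hcard : s.card = p) (hs : StrictMonoOn π s) :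
    ∃ t : Finset (Fin n), s ⊆ t ∧ t.card = p + 1 ∧ StrictMonoOn π t := by
  set i := s.min' hne
  have hi : i ∈ s := s.min'_mem hne
  have hle : ∀ j ∈ s, i ≤ j := fun j => s.min'_le j
  by_cases hmin : IsLTRMin π i
  · have hsub := subset_northeast_of_strictMonoOn hs hi hle
    have hlt : p + 1 ≤ (northeast π i).card := by
      have hle := Finset.card_le_card hsub
      have hne := hpeak i hmin
      rw [card_northeast] at hle ⊢
      omega
    obtain ⟨t, hst, ht, htcard⟩ := Finset.exists_subsuperset_card_eq hsub (by omega) hlt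
    exact ⟨t, hst, htcard, (h.strictMonoOn_northeast i).mono (by exact_mod_cast ht)⟩
  · obtain ⟨j, hji, hπ⟩ : ∃ j < i, π j ≤ π i := by simpa [IsLTRMin] using hmin
    have hbelow : ∀ k ∈ s, j < k ∧ π j < π k := fun k hk =>
      ⟨hji.trans_le (hle k hk),
        (hπ.lt_of_ne (π.injective.ne hji.ne)).trans_le (hs.monotoneOn hi hk (hle k hk))⟩
    refine ⟨insert j s, Finset.subset_insert j s, ?_, ?_⟩
    · rw [Finset.card_insert_of_notMem fun hj => (hbelow j hj).1.false, hcard]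
    · rw [Finset.coe_insert]
      exact strictMonoOn_insert_of_forall_lt hs hbelow

lemma Avoids132.avoidsHat_one_iff (h : Avoids132 π) (hp : 1 ≤ p) {i : Fin (p + 1)} :
    AvoidsHat 1 i π ↔ ¬ ∃ j, IsLTRMin π j ∧ hstat π j + 1 = p := by
  rw [avoidsHat_one_iff_exists_superset]
  constructor
  · rintro hext ⟨j, hmin, hj⟩
    obtain ⟨t, hsub, hcard, ht⟩ :=
      hext (northeast π j) (by rw [card_northeast, hj]) (h.strictMonoOn_northeast j)
    have hjt := hsub (self_mem_northeast π j)
    have hle := Finset.card_le_card <|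
      subset_northeast_of_strictMonoOn ht hjt (hmin.le_of_strictMonoOn ht hjt)
    rw [card_northeast] at hle
    omega
  · intro hpeak s hcard hs
    exact h.exists_strictMonoOn_superset (fun j hmin hj => hpeak ⟨j, hmin, hj⟩)
      (Finset.card_pos.1 (by omega)) hcard hs

end

theorem stmt7_general (n p : ℕ) (hp : 1 ≤ p) (i : Fin (p + 1)) :
    Set.BijOn phi
      {π : Equiv.Perm (Fin n) | Avoids132 π ∧ AvoidsHat (1 : Equiv.Perm (Fin (p + 1))) i π}
      {w : List Bool | IsDyckPath n w ∧ ¬ HasPeakAtHeight w p} := by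
  have hdomain : {π : Equiv.Perm (Fin n) | Avoids132 π ∧ AvoidsHat 1 i π} =
      {π | Avoids132 π} ∩ phi ⁻¹' {w | IsDyckPath n w ∧ ¬ HasPeakAtHeight w p} := by
    ext π
    refine and_congr_right fun h => ?_
    rw [h.avoidsHat_one_iff hp, ← h.hasPeakAtHeight_phi_iff]
    exact (and_iff_right ((bijOn_phi n).mapsTo h)).symm
  rw [hdomain]
  exact (bijOn_phi n).subset_right fun w hw => hw.1

/-- Theorem `cat`. For `1 ≤ p ≤ n`, the standard bijection `φ`, restricted to
`S_n(132, 1̂2⋯(p+1))` — permutations avoiding `132` and avoiding the hatted pattern obtained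
from the increasing pattern `12⋯(p+1)` (the identity permutation of length `p + 1`) by marking
its first entry — is a bijection onto the set of Dyck `n`-paths with no peak at height `p`. -/
theorem stmt7 (n p : ℕ) (hp1 : 1 ≤ p) (hpn : p ≤ n) :
    Set.BijOn phi
      {π : Equiv.Perm (Fin n) | Avoids132 π ∧ AvoidsHat (1 : Equiv.Perm (Fin (p + 1))) 0 π}
      {w : List Bool | IsDyckPath n w ∧ ¬ HasPeakAtHeight w p} :=
  stmt7_general n p hp1 0
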